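/- arXiv:2208.12174 — 2 statements merged into one kernel-verified Lean document; each statement's English description precedes it below -/
import Mathlib

section
/- For μ-almost every x ∈ T², the sequence (U_n(x))_{n≥1} of Chacon-type maps is eventually constant, and its μ-a.e. pointwise limit U is an automorphism of T²: U is measurable, bijective up to μ-null sets with measurable inverse, and μ(U⁻¹(A)) = μ(A) for every Borel set A. -/
/-!
For `n ≥ 1` the map `U_{n+1}` is `U_n ∘ σ_n`, where `σ_n` permutes the eight squares of side
`2⁻⁽ⁿ⁺¹⁾` tiling a block in the lower right corner of the torus along a 7-cycle, moving each
square by a translation; `U_1` itself permutes the four quarter squares along a 3-cycle. So every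
`U_n` is a measure-preserving bijection. The blocks shrink to the corner `(1, 0)`, which is not a
point of `[0, 1)²`, so `U_n x` is eventually constant for every `x`. Their images under `U_n` lie in
the two strips of width `2⁻ⁿ` along the sides `x = 1` and `y = 1`, so they vanish in the limit as
well. Hence the inverses `U_n⁻¹` are also eventually constant at every point, and the limit is a
bijection. At each point it agrees with one of the countably many measure-preserving bijections
`U_n`, and this alone forces it to preserve the measure.
-/

open MeasureTheory Filter Set

noncomputable section

instance fact01 : Fact ((0:ℝ) < 1) := ⟨one_pos⟩

/-- The two-dimensional torus `[0,1)²` with coordinatewise addition mod 1. -/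
abbrev T2 : Type := AddCircle (1:ℝ) × AddCircle (1:ℝ)

/-- The canonical representative in `[0,1)` of a point of the circle. -/
noncomputable def rep (x : AddCircle (1:ℝ)) : ℝ := ((AddCircle.equivIco 1 0) x : ℝ)

/-- The point of the torus with coordinates `a`, `b` (mod 1). -/
noncomputable def tv (a b : ℝ) : T2 := ((a : AddCircle (1:ℝ)), (b : AddCircle (1:ℝ)))

open Classical in
/-- The Chacon-type maps `U_n` on the torus. -/
noncomputable def chaconU : ℕ → T2 → T2
  | 0 => id
  | 1 => fun x =>
      if 0 ≤ rep x.1 ∧ rep x.1 < 1/2 ∧ 1/2 ≤ rep x.2 ∧ rep x.2 < 1 then x + tv (1/2) 0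
      else if 1/2 ≤ rep x.1 ∧ rep x.1 < 1 ∧ 1/2 ≤ rep x.2 ∧ rep x.2 < 1 then
        x + tv (-(1/2)) (-(1/2))
      else if 0 ≤ rep x.1 ∧ rep x.1 < 1/2 ∧ 0 ≤ rep x.2 ∧ rep x.2 < 1/2 then x + tv 0 (1/2)
      else x
  | (n+2) => fun x =>
      let s : ℝ := 1 / 2 ^ (n+2)
      let a := rep x.1
      let b := rep x.2
      if 1-4*s ≤ a ∧ a < 1-3*s ∧ s ≤ b ∧ b < 2*s then x + tv (5*s-1) (1-2*s)
      else if 1-3*s ≤ a ∧ a < 1-2*s ∧ s ≤ b ∧ b < 2*s then x + tv s 0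
      else if 1-4*s ≤ a ∧ a < 1-3*s ∧ 0 ≤ b ∧ b < s then x + tv (3*s) s
      else if 1-3*s ≤ a ∧ a < 1-2*s ∧ 0 ≤ b ∧ b < s then x + tv s 0
      else if 1-2*s ≤ a ∧ a < 1 ∧ s ≤ b ∧ b < 2*s then x + tv (2*s-1) (1-3*s)
      else if 1-2*s ≤ a ∧ a < 1-s ∧ 0 ≤ b ∧ b < s then x + tv (2*s-1) (1-s)
      else if 1-s ≤ a ∧ a < 1 ∧ 0 ≤ b ∧ b < s then x
      else chaconU (n+1) x

/-- An automorphism of the torus: measurable, bijective up to null sets with measurable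
inverse, and measure-preserving. -/
def IsAutomorphism (U : T2 → T2) : Prop :=
  Measurable U ∧ ∃ V : T2 → T2, Measurable V ∧
    (∀ᵐ x ∂(volume : Measure T2), V (U x) = x) ∧
    (∀ᵐ x ∂(volume : Measure T2), U (V x) = x) ∧
    ∀ A : Set T2, MeasurableSet A → volume (U ⁻¹' A) = volume A

open scoped Pointwise

theorem measurePreserving_of_forall_exists_eq {ι X Y : Type*} [Countable ι] [MeasurableSpace X]
    [MeasurableSpace Y] {μ : Measure X} {ν : Measure Y} {U : X ≃ᵐ Y} {T : ι → X ≃ᵐ Y}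
    (hT : ∀ i, MeasurePreserving (T i) μ ν) (hU : ∀ x, ∃ i, U x = T i x) :
    MeasurePreserving U μ ν := by
  suffices h : ν.map U.symm = μ from MeasurePreserving.symm U.symm ⟨U.symm.measurable, h⟩
  let E (i : ι) : Set X := {x | U x = T i x}
  have hE (i : ι) : EqOn U (T i) (E i) := fun x hx => hx
  refine Measure.ext_of_iUnion_eq_univ (iUnion_eq_univ_iff.2 hU : ⋃ i, E i = univ) fun i =>
    Measure.ext fun A hA => ?_
  rw [Measure.restrict_apply hA, Measure.restrict_apply hA]
  calc ν.map U.symm (A ∩ E i) = ν (U '' (A ∩ E i)) := by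
        rw [U.symm.map_apply, U.image_eq_preimage_symm]
    _ = ν (T i '' (A ∩ E i)) := by rw [((hE i).mono inter_subset_right).image_eq]
    _ = μ (A ∩ E i) := by
        rw [(T i).image_eq_preimage_symm, (hT i).symm.measure_preimage_equiv]

/-- A sequence of bijections `T n` whose `n`-th step only modifies `T n` on `B n`, where the sets
`B n` decrease to the empty set and so do their images `T n '' B n`. -/
structure StabilizesOff {X Y : Type*} (T : ℕ → X ≃ Y) (B : ℕ → Set X) : Prop where
  antitone : Antitone B
  eqOn_compl : ∀ n, EqOn (T (n + 1)) (T n) (B n)ᶜ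
  exists_notMem : ∀ x, ∃ n, x ∉ B n
  exists_notMem_image : ∀ y, ∃ n, y ∉ T n '' B n

namespace StabilizesOff

section Limit

variable {X Y : Type*} {T : ℕ → X ≃ Y} {B : ℕ → Set X}

lemma apply_eq (h : StabilizesOff T B) {n m : ℕ} (hnm : n ≤ m) {x : X} (hx : x ∉ B n) :
    T m x = T n x := by
  induction m, hnm using Nat.le_induction with
  | base => rfl
  | succ m hnm ih => rw [h.eqOn_compl m fun hm => hx (h.antitone hnm hm), ih]

lemma image_succ_eq (h : StabilizesOff T B) (n : ℕ) : T (n + 1) '' B n = T n '' B n := by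
  rw [← compl_inj_iff, ← image_compl_eq (T _).bijective, ← image_compl_eq (T _).bijective,
    (h.eqOn_compl n).image_eq]

lemma symm (h : StabilizesOff T B) :
    StabilizesOff (fun n => (T n).symm) (fun n => T n '' B n) where
  antitone := antitone_nat_of_succ_le fun n =>
    (image_mono (h.antitone n.le_succ)).trans (h.image_succ_eq n).subset
  eqOn_compl n y hy := by
    have hx : (T n).symm y ∉ B n := fun hx => hy ⟨_, hx, (T n).apply_symm_apply y⟩
    rw [Equiv.symm_apply_eq, h.eqOn_compl n hx, Equiv.apply_symm_apply]
  exists_notMem := h.exists_notMem_image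
  exists_notMem_image x := by
    simpa only [Equiv.symm_image_image] using h.exists_notMem x

open Classical in
/-- The eventual value of `T n x`, read off at the first `n` with `x ∉ B n`. -/
def limitFun (h : StabilizesOff T B) (x : X) : Y := T (Nat.find (h.exists_notMem x)) x

lemma limitFun_eq (h : StabilizesOff T B) {n : ℕ} {x : X} (hx : x ∉ B n) :
    h.limitFun x = T n x := by
  classical
  exact (h.apply_eq (Nat.find_min' _ hx) (Nat.find_spec (h.exists_notMem x))).symm

lemma leftInverse_limitFun (h : StabilizesOff T B) :
    Function.LeftInverse h.symm.limitFun h.limitFun := fun x => by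
  obtain ⟨n, hn⟩ := h.exists_notMem x
  have hn' : T n x ∉ T n '' B n := by rwa [(T n).injective.mem_set_image]
  rw [h.limitFun_eq hn, h.symm.limitFun_eq hn', Equiv.symm_apply_apply]

lemma limitFun_symm_symm (h : StabilizesOff T B) : h.symm.symm.limitFun = h.limitFun := by
  funext x
  obtain ⟨n, hn⟩ := h.exists_notMem x
  rw [h.limitFun_eq hn, h.symm.symm.limitFun_eq (n := n) (by simpa using hn), Equiv.symm_symm]

end Limit

variable {X Y : Type*} [MeasurableSpace X] [MeasurableSpace Y] {T : ℕ → X ≃ᵐ Y} {B : ℕ → Set X}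

lemma measurable_limitFun (h : StabilizesOff (fun n => (T n).toEquiv) B)
    (hB : ∀ n, MeasurableSet (B n)) : Measurable h.limitFun := by
  classical
  exact Measurable.find (fun n => (T n).measurable) (fun n => (hB n).compl) h.exists_notMem

/-- The pointwise limit as a measurable equivalence; its inverse is the limit of the inverse maps,
which stabilize off the sets `T n '' B n`. -/
def limit (h : StabilizesOff (fun n => (T n).toEquiv) B)
    (hB : ∀ n, MeasurableSet (B n)) : X ≃ᵐ Y where
  toFun := h.limitFun
  invFun := h.symm.limitFun
  left_inv := h.leftInverse_limitFun
  right_inv := h.limitFun_symm_symm ▸ h.symm.leftInverse_limitFun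
  measurable_toFun := h.measurable_limitFun hB
  measurable_invFun := measurable_limitFun (T := fun n => (T n).symm) h.symm
    fun n => (T n).measurableSet_image.2 (hB n)

lemma measurePreserving_limit {μ : Measure X} {ν : Measure Y}
    (h : StabilizesOff (fun n => (T n).toEquiv) B) (hB : ∀ n, MeasurableSet (B n))
    (hT : ∀ n, MeasurePreserving (T n) μ ν) : MeasurePreserving (h.limit hB) μ ν := by
  refine measurePreserving_of_forall_exists_eq hT fun x => ?_
  obtain ⟨n, hn⟩ := h.exists_notMem x
  exact ⟨n, h.limitFun_eq hn⟩

end StabilizesOff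

section Exchange

variable {G ι : Type*} [AddCommGroup G] {Q : Set G} {o : ι → G}

lemma add_sub_mem_vadd {i : ι} (j : ι) {x : G} (hx : x ∈ o i +ᵥ Q) :
    x + (o j - o i) ∈ o j +ᵥ Q := by
  obtain ⟨q, hq, rfl⟩ := hx
  refine ⟨q, hq, ?_⟩
  simp only [vadd_eq_add]
  abel

variable [Fintype ι]

/-- The exchange of the translates `o i +ᵥ Q` according to `π`: the `i`-th translate is moved onto
the `π i`-th one, and all other points are fixed. It is meant for disjoint translates. -/
def exchangeFun (Q : Set G) (o : ι → G) (π : Equiv.Perm ι) (x : G) : G :=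
  x + ∑ i, (o i +ᵥ Q).indicator (fun _ => o (π i) - o i) x

lemma exchangeFun_of_mem (hd : Pairwise (Function.onFun Disjoint fun i => o i +ᵥ Q))
    (π : Equiv.Perm ι) {i : ι} {x : G} (hx : x ∈ o i +ᵥ Q) :
    exchangeFun Q o π x = x + (o (π i) - o i) := by
  rw [exchangeFun, Finset.sum_eq_single_of_mem i (Finset.mem_univ i) fun j _ hj =>
    indicator_of_notMem (disjoint_left.1 (hd hj.symm) hx) _, indicator_of_mem hx]

lemma exchangeFun_of_forall_notMem (π : Equiv.Perm ι) {x : G} (hx : ∀ i, x ∉ o i +ᵥ Q) :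
    exchangeFun Q o π x = x := by
  rw [exchangeFun, Finset.sum_eq_zero fun i _ => indicator_of_notMem (hx i) _, add_zero]

lemma leftInverse_exchangeFun (hd : Pairwise (Function.onFun Disjoint fun i => o i +ᵥ Q))
    (π : Equiv.Perm ι) :
    Function.LeftInverse (exchangeFun Q o π.symm) (exchangeFun Q o π) := fun x => by
  by_cases hx : ∃ i, x ∈ o i +ᵥ Q
  · obtain ⟨i, hi⟩ := hx
    rw [exchangeFun_of_mem hd π hi, exchangeFun_of_mem hd π.symm (add_sub_mem_vadd (π i) hi),
      Equiv.symm_apply_apply]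
    abel
  · rw [not_exists] at hx
    rw [exchangeFun_of_forall_notMem π hx, exchangeFun_of_forall_notMem π.symm hx]

variable [MeasurableSpace G] [MeasurableAdd₂ G]

lemma measurable_exchangeFun (hQ : MeasurableSet Q) (π : Equiv.Perm ι) :
    Measurable (exchangeFun Q o π) :=
  measurable_id.add <| Finset.measurable_sum _ fun i _ =>
    measurable_const.indicator (hQ.const_vadd (o i))

/-- The exchange of disjoint translates of a measurable set, as a measurable equivalence. -/
def exchange (hQ : MeasurableSet Q)
    (hd : Pairwise (Function.onFun Disjoint fun i => o i +ᵥ Q)) (π : Equiv.Perm ι) : G ≃ᵐ G where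
  toFun := exchangeFun Q o π
  invFun := exchangeFun Q o π.symm
  left_inv := leftInverse_exchangeFun hd π
  right_inv := leftInverse_exchangeFun hd π.symm
  measurable_toFun := measurable_exchangeFun hQ π
  measurable_invFun := measurable_exchangeFun hQ π.symm

lemma measurePreserving_exchange (μ : Measure G) [μ.IsAddRightInvariant] (hQ : MeasurableSet Q)
    (hd : Pairwise (Function.onFun Disjoint fun i => o i +ᵥ Q)) (π : Equiv.Perm ι) :
    MeasurePreserving (exchange hQ hd π) μ μ := by
  let v : Option ι → G := fun i => i.elim 0 fun j => o (π j) - o j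
  refine measurePreserving_of_forall_exists_eq (T := fun i => MeasurableEquiv.addRight (v i))
    (fun i => measurePreserving_add_right μ (v i)) fun x => ?_
  by_cases hx : ∃ i, x ∈ o i +ᵥ Q
  · obtain ⟨i, hi⟩ := hx
    exact ⟨some i, exchangeFun_of_mem hd π hi⟩
  · rw [not_exists] at hx
    exact ⟨none, (exchangeFun_of_forall_notMem π hx).trans (add_zero x).symm⟩

end Exchange

section Torus

lemma rep_nonneg (x : AddCircle (1 : ℝ)) : 0 ≤ rep x := (AddCircle.equivIco 1 0 x).2.1

lemma rep_lt_one (x : AddCircle (1 : ℝ)) : rep x < 1 :=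
  (AddCircle.equivIco (1 : ℝ) 0 x).2.2.trans_eq (zero_add 1)

lemma coe_rep (x : AddCircle (1 : ℝ)) : (rep x : AddCircle (1 : ℝ)) = x := AddCircle.coe_equivIco

lemma rep_coe {r : ℝ} (hr : r ∈ Ico 0 1) : rep (r : AddCircle (1 : ℝ)) = r :=
  AddCircle.equivIco_coe_of_mem (by rwa [zero_add])

lemma rep_add_coe {x : AddCircle (1 : ℝ)} {c : ℝ} (h : rep x + c ∈ Ico 0 1) :
    rep (x + c) = rep x + c := by
  rw [← rep_coe h, AddCircle.coe_add, coe_rep]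

lemma measurable_rep : Measurable rep :=
  measurable_subtype_coe.comp (AddCircle.measurableEquivIco 1 0).measurable

lemma rep_neg_coe_add_lt_iff {c s : ℝ} (hc : 0 ≤ c) (hs : 0 ≤ s) (hcs : c + s ≤ 1)
    (x : AddCircle (1 : ℝ)) :
    rep (-(c : AddCircle (1 : ℝ)) + x) < s ↔ c ≤ rep x ∧ rep x < c + s := by
  have h0 := rep_nonneg x
  have h1 := rep_lt_one x
  rw [neg_add_eq_sub, sub_eq_add_neg, ← AddCircle.coe_neg]
  rcases le_or_gt c (rep x) with hcx | hxc
  · rw [rep_add_coe ⟨by linarith, by linarith⟩]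
    constructor
    · exact fun h => ⟨hcx, by linarith⟩
    · exact fun h => by linarith [h.2]
  · have hperiod : ((-c : ℝ) : AddCircle (1 : ℝ)) = ((1 - c : ℝ) : AddCircle (1 : ℝ)) := by
      rw [AddCircle.coe_sub, AddCircle.coe_period, zero_sub, AddCircle.coe_neg]
    rw [hperiod, rep_add_coe ⟨by linarith, by linarith⟩]
    exact ⟨fun h => by linarith, fun h => by linarith [h.1]⟩

lemma zero_eq_tv : (0 : T2) = tv 0 0 := rfl

lemma tv_add_tv (a b c d : ℝ) : tv a b + tv c d = tv (a + c) (b + d) := rfl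

lemma tv_sub_tv (a b c d : ℝ) : tv a b - tv c d = tv (a - c) (b - d) := rfl

end Torus

namespace Chacon

section Grid

variable {k l : ℕ} {s : ℝ}

/-- The lower left corner of the cell in column `p.1` and row `p.2` of the `k × l` grid of squares
of side `s` filling `[1 - k * s, 1) × [0, l * s)`; columns are counted from the left and rows from
the bottom, starting at `0`. -/
def corner (s : ℝ) (p : Fin k × Fin l) : T2 := tv (1 - k * s + p.1 * s) (p.2 * s)

/-- The square `[0, s) × [0, s)`. -/
def square (s : ℝ) : Set T2 := {x | rep x.1 < s ∧ rep x.2 < s}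

/-- The cell `p` of the `k × l` grid, as a translate of `square s`. -/
abbrev cell (s : ℝ) (p : Fin k × Fin l) : Set T2 := corner s p +ᵥ square s

/-- The rectangle `[1 - k * s, 1) × [0, l * s)`. -/
def block (k l : ℕ) (s : ℝ) : Set T2 := {x | 1 - k * s ≤ rep x.1 ∧ rep x.2 < l * s}

lemma measurableSet_square (s : ℝ) : MeasurableSet (square s) :=
  (measurableSet_lt (measurable_rep.comp measurable_fst) measurable_const).inter
    (measurableSet_lt (measurable_rep.comp measurable_snd) measurable_const)

lemma measurableSet_block (k l : ℕ) (s : ℝ) : MeasurableSet (block k l s) :=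
  (measurableSet_le measurable_const (measurable_rep.comp measurable_fst)).inter
    (measurableSet_lt (measurable_rep.comp measurable_snd) measurable_const)

lemma monotone_block (k l : ℕ) : Monotone (block k l) := fun _ _ hst _ hx =>
  ⟨(sub_le_sub_left (mul_le_mul_of_nonneg_left hst k.cast_nonneg) 1).trans hx.1,
    hx.2.trans_le (mul_le_mul_of_nonneg_left hst l.cast_nonneg)⟩

lemma fin_mul_add_le (hs : 0 ≤ s) (i : Fin k) : (i : ℝ) * s + s ≤ k * s := by
  have hi : (i : ℝ) + 1 ≤ k := by exact_mod_cast i.2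
  linarith [mul_le_mul_of_nonneg_right hi hs]

lemma mem_cell_iff (hs : 0 ≤ s) (hk : k * s ≤ 1) (hl : l * s ≤ 1)
    (p : Fin k × Fin l) (x : T2) :
    x ∈ cell s p ↔
      (1 - k * s + p.1 * s ≤ rep x.1 ∧ rep x.1 < 1 - k * s + p.1 * s + s) ∧
        p.2 * s ≤ rep x.2 ∧ rep x.2 < p.2 * s + s := by
  have hp1 : 0 ≤ (p.1 : ℝ) * s := by positivity
  rw [← rep_neg_coe_add_lt_iff (by linarith) hs (by linarith [fin_mul_add_le hs p.1]),
    ← rep_neg_coe_add_lt_iff (by positivity) hs (by linarith [fin_mul_add_le hs p.2]),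
    mem_vadd_set_iff_neg_vadd_mem]
  rfl

lemma rep_fst_lt_iff_of_mem_cell (hs : 0 < s) (hk : k * s ≤ 1) (hl : l * s ≤ 1)
    {p : Fin k × Fin l} {x : T2} (hx : x ∈ cell s p) (j : ℕ) :
    rep x.1 < 1 - k * s + j * s ↔ p.1 < j := by
  obtain ⟨⟨h1, h2⟩, -⟩ := (mem_cell_iff hs.le hk hl p x).1 hx
  constructor
  · intro h
    exact_mod_cast lt_of_mul_lt_mul_right (by linarith : (p.1 : ℝ) * s < j * s) hs.le
  · intro h
    have hj : (p.1 : ℝ) + 1 ≤ j := by exact_mod_cast h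
    linarith [mul_le_mul_of_nonneg_right hj hs.le]

lemma mul_le_and_lt_iff_floor_div_eq {t : ℝ} (hs : 0 < s) (i : ℕ) :
    i * s ≤ t ∧ t < i * s + s ↔ 0 ≤ t ∧ ⌊t / s⌋₊ = i := by
  rw [← le_div_iff₀ hs, ← add_one_mul, ← div_lt_iff₀ hs]
  constructor
  · rintro ⟨h1, h2⟩
    have h0 : 0 ≤ t / s := i.cast_nonneg.trans h1
    exact ⟨(le_div_iff₀ hs).1 h0 |>.trans_eq' (zero_mul s), (Nat.floor_eq_iff h0).2 ⟨h1, h2⟩⟩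
  · exact fun ⟨h0, h⟩ => (Nat.floor_eq_iff (by positivity)).1 h

lemma mem_cell_iff_floor (hs : 0 < s) (hk : k * s ≤ 1) (hl : l * s ≤ 1)
    (p : Fin k × Fin l) (x : T2) :
    x ∈ cell s p ↔
      1 - k * s ≤ rep x.1 ∧ ⌊(rep x.1 - (1 - k * s)) / s⌋₊ = p.1 ∧ ⌊rep x.2 / s⌋₊ = p.2 := by
  have h1 := mul_le_and_lt_iff_floor_div_eq (t := rep x.1 - (1 - k * s)) hs p.1
  have h2 := mul_le_and_lt_iff_floor_div_eq (t := rep x.2) hs p.2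
  rw [le_sub_iff_add_le', sub_lt_iff_lt_add', sub_nonneg, ← add_assoc] at h1
  rw [mem_cell_iff hs.le hk hl, h1, h2]
  simp only [rep_nonneg, true_and, and_assoc]

lemma pairwise_disjoint_cell (hs : 0 < s) (hk : k * s ≤ 1) (hl : l * s ≤ 1) :
    Pairwise (Function.onFun Disjoint fun p : Fin k × Fin l => cell s p) := by
  refine fun p q hpq => disjoint_left.2 fun x hp hq => hpq ?_
  rw [mem_cell_iff_floor hs hk hl] at hp hq
  exact Prod.ext (Fin.ext (hp.2.1.symm.trans hq.2.1)) (Fin.ext (hp.2.2.symm.trans hq.2.2))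

lemma mem_block_iff_exists (hs : 0 < s) (hk : k * s ≤ 1) (hl : l * s ≤ 1) (x : T2) :
    x ∈ block k l s ↔ ∃ p : Fin k × Fin l, x ∈ cell s p := by
  simp only [mem_cell_iff_floor hs hk hl]
  constructor
  · rintro ⟨h1, h2⟩
    have hcol : ⌊(rep x.1 - (1 - k * s)) / s⌋₊ < k :=
      (Nat.floor_lt (div_nonneg (sub_nonneg.2 h1) hs.le)).2
        ((div_lt_iff₀ hs).2 (by linarith [rep_lt_one x.1]))
    have hrow : ⌊rep x.2 / s⌋₊ < l :=
      (Nat.floor_lt (div_nonneg (rep_nonneg x.2) hs.le)).2 ((div_lt_iff₀ hs).2 h2)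
    exact ⟨(⟨_, hcol⟩, ⟨_, hrow⟩), h1, rfl, rfl⟩
  · rintro ⟨p, h1, -, h2⟩
    refine ⟨h1, ?_⟩
    have h := ((mul_le_and_lt_iff_floor_div_eq hs p.2).2 ⟨rep_nonneg x.2, h2⟩).2
    linarith [fin_mul_add_le hs.le p.2]

end Grid

/-- The side `2⁻ⁿ` of the squares exchanged in the `n`-th stage of the construction. -/
def side (n : ℕ) : ℝ := 1 / 2 ^ n

lemma side_def (n : ℕ) : side n = 1 / 2 ^ n := rfl

lemma side_pos (n : ℕ) : 0 < side n := by
  rw [side_def]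
  positivity

lemma side_eq_two_mul (n : ℕ) : side n = 2 * side (n + 1) := by
  rw [side_def, side_def, pow_succ]
  field_simp

lemma antitone_side : Antitone side :=
  antitone_nat_of_succ_le fun n => by linarith [side_eq_two_mul n, side_pos (n + 1)]

lemma exists_side_lt {ε : ℝ} (hε : 0 < ε) : ∃ n, side (n + 2) < ε := by
  obtain ⟨n, hn⟩ := exists_pow_lt_of_lt_one hε (one_half_lt_one (α := ℝ))
  refine ⟨n, (antitone_side (Nat.le_add_right n 2)).trans_lt ?_⟩
  rwa [side_def, ← one_div_pow]

lemma natCast_mul_side_le_one {k n : ℕ} (h : k ≤ 2 ^ n) : k * side n ≤ 1 := by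
  rw [side_def, mul_one_div, div_le_one (by positivity)]
  exact_mod_cast h

lemma two_mul_side_le_one (n : ℕ) : ((2 : ℕ) : ℝ) * side (n + 1) ≤ 1 :=
  natCast_mul_side_le_one (le_self_pow₀ one_le_two n.succ_ne_zero)

lemma four_mul_side_le_one (n : ℕ) : ((4 : ℕ) : ℝ) * side (n + 2) ≤ 1 :=
  natCast_mul_side_le_one (Nat.pow_le_pow_right two_pos (Nat.le_add_left 2 n))

/-- The permutation of the four quarter squares realized by `U_1`. -/
def baseCycle : Equiv.Perm (Fin 2 × Fin 2) := c[(0, 1), (1, 1), (0, 0)]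

/-- The permutation `σ` of the eight cells of side `s = side (n + 2)` in `block 4 2 s` for which
`U_{n+2}` is `U_{n+1}` composed with the exchange of cells along `σ`. -/
def stepCycle : Equiv.Perm (Fin 4 × Fin 2) :=
  c[(0, 1), (1, 1), (2, 1), (0, 0), (3, 1), (1, 0), (2, 0)]

lemma baseCycle_apply :
    baseCycle (0, 1) = (1, 1) ∧ baseCycle (1, 1) = (0, 0) ∧ baseCycle (0, 0) = (0, 1) ∧
      baseCycle (1, 0) = (1, 0) := by
  decide

lemma stepCycle_apply :
    (stepCycle (0, 1) = (1, 1) ∧ stepCycle (1, 1) = (2, 1) ∧ stepCycle (2, 1) = (0, 0)) ∧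
      stepCycle (0, 0) = (3, 1) ∧ stepCycle (3, 1) = (1, 0) ∧ stepCycle (1, 0) = (2, 0) ∧
        stepCycle (2, 0) = (0, 1) ∧ stepCycle (3, 0) = (3, 0) := by
  decide

/-- The vector by which `U_1` translates each quarter square. -/
def baseDisplacement : Fin 2 × Fin 2 → T2
  | (0, 0) => tv 0 (1 / 2)
  | (0, 1) => tv (1 / 2) 0
  | (1, 0) => 0
  | (1, 1) => tv (-(1 / 2)) (-(1 / 2))

lemma baseDisplacement_eq (p : Fin 2 × Fin 2) :
    baseDisplacement p = corner (side 1) (baseCycle p) - corner (side 1) p := by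
  fin_cases p <;>
    simp only [baseDisplacement, Fin.zero_eta, Fin.mk_one, baseCycle_apply, corner, zero_eq_tv,
      tv_sub_tv] <;>
    congr 1 <;> norm_num [side_def]

lemma chaconU_one_of_mem_cell {p : Fin 2 × Fin 2} {x : T2} (hx : x ∈ cell (side 1) p) :
    chaconU 1 x = x + baseDisplacement p := by
  rw [mem_cell_iff (side_pos 1).le (two_mul_side_le_one 0) (two_mul_side_le_one 0)] at hx
  simp only [chaconU]
  fin_cases p <;> norm_num [side_def] at hx <;>
    simp only [baseDisplacement] <;>
    split_ifs <;> grind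

lemma mem_block_two_two_side_one (x : T2) : x ∈ block 2 2 (side 1) := by
  have h0 := rep_nonneg x.1
  have h1 := rep_lt_one x.2
  constructor <;> norm_num [side_def] <;> assumption

lemma chaconU_one_eq_exchangeFun :
    chaconU 1 = exchangeFun (square (side 1)) (corner (side 1)) baseCycle := by
  funext x
  have hs := side_pos 1
  have h2 := two_mul_side_le_one 0
  obtain ⟨p, hp⟩ := (mem_block_iff_exists hs h2 h2 x).1 (mem_block_two_two_side_one x)
  rw [exchangeFun_of_mem (pairwise_disjoint_cell hs h2 h2) _ hp, chaconU_one_of_mem_cell hp,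
    baseDisplacement_eq]

/-- The vector by which `U_{n+1}` translates the left half of `block 4 2 s`, `s = side (n + 2)`;
the right half is fixed. -/
def cornerShift (s : ℝ) : T2 := tv (4 * s - 1) (1 - 2 * s)

/-- The vector by which `U_{n+2}` translates each cell of `block 4 2 s`, `s = side (n + 2)`. -/
def stepDisplacement (s : ℝ) : Fin 4 × Fin 2 → T2
  | (0, 0) => tv (3 * s) s
  | (0, 1) => tv (5 * s - 1) (1 - 2 * s)
  | (1, _) => tv s 0
  | (2, 0) => tv (2 * s - 1) (1 - s)
  | (2, 1) | (3, 1) => tv (2 * s - 1) (1 - 3 * s)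
  | (3, 0) => 0

lemma stepDisplacement_eq (s : ℝ) (p : Fin 4 × Fin 2) :
    stepDisplacement s p = corner s (stepCycle p) - corner s p +
      if (stepCycle p).1 < 2 then cornerShift s else 0 := by
  fin_cases p <;>
    simp only [stepDisplacement, Fin.zero_eta, Fin.mk_one, Fin.reduceFinMk, stepCycle_apply,
      Fin.reduceLT, if_true, if_false, corner, cornerShift, zero_eq_tv, tv_sub_tv, tv_add_tv] <;>
    congr 1 <;> norm_num <;> ring_nf

lemma chaconU_add_two_of_mem_cell (n : ℕ) {p : Fin 4 × Fin 2} {x : T2}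
    (hx : x ∈ cell (side (n + 2)) p) :
    chaconU (n + 2) x = x + stepDisplacement (side (n + 2)) p := by
  have hs := side_pos (n + 2)
  rw [mem_cell_iff hs.le (four_mul_side_le_one n) (two_mul_side_le_one (n + 1))] at hx
  have ha := rep_lt_one x.1
  simp only [chaconU, ← side_def]
  fin_cases p <;> norm_num at hx <;>
    simp only [stepDisplacement] <;>
    split_ifs <;> grind

lemma chaconU_of_notMem_block (n : ℕ) {x : T2} (hx : x ∉ block 4 2 (side (n + 2))) :
    chaconU (n + 2) x = chaconU (n + 1) x := by
  have hs := side_pos (n + 2)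
  simp only [block, mem_ofPred_eq, not_and, Nat.cast_ofNat] at hx
  simp only [chaconU, ← side_def]
  split_ifs <;> grind

-- The block consists of the two rightmost cells in the bottom row of the grid of stage `n + 1`.
lemma chaconU_succ_of_mem_block (n : ℕ) {x : T2} (hx : x ∈ block 4 2 (side (n + 2))) :
    chaconU (n + 1) x =
      x + if rep x.1 < 1 - 2 * side (n + 2) then cornerShift (side (n + 2)) else 0 := by
  obtain ⟨hx1, hx2⟩ := hx
  have ha := rep_lt_one x.1
  have hb := rep_nonneg x.2
  rcases n with _ | n
  · have mem_iff (p) := mem_cell_iff (side_pos 1).le (two_mul_side_le_one 0)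
      (two_mul_side_le_one 0) p x
    norm_num [side_def] at hx1 hx2
    split_ifs with h <;> norm_num [side_def] at h
    · have hcell : x ∈ cell (side 1) ((0, 0) : Fin 2 × Fin 2) :=
        (mem_iff (0, 0)).2 (by norm_num [side_def]; grind)
      rw [chaconU_one_of_mem_cell hcell]
      norm_num [baseDisplacement, cornerShift, side_def]
    · have hcell : x ∈ cell (side 1) ((1, 0) : Fin 2 × Fin 2) :=
        (mem_iff (1, 0)).2 (by norm_num [side_def]; grind)
      rw [chaconU_one_of_mem_cell hcell, baseDisplacement]
  · have hs : side (n + 2) = 2 * side (n + 3) := side_eq_two_mul (n + 2)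
    have mem_iff (p) := mem_cell_iff (side_pos (n + 2)).le (four_mul_side_le_one n)
      (two_mul_side_le_one (n + 1)) p x
    push_cast at hx1 hx2
    split_ifs with h
    · have hcell : x ∈ cell (side (n + 2)) ((2, 0) : Fin 4 × Fin 2) :=
        (mem_iff (2, 0)).2 (by norm_num; grind)
      rw [chaconU_add_two_of_mem_cell n hcell, stepDisplacement, cornerShift, hs]
      ring_nf
    · have hcell : x ∈ cell (side (n + 2)) ((3, 0) : Fin 4 × Fin 2) :=
        (mem_iff (3, 0)).2 (by norm_num; grind)
      rw [chaconU_add_two_of_mem_cell n hcell, stepDisplacement]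

lemma chaconU_add_two_eq_comp (n : ℕ) : chaconU (n + 2) = chaconU (n + 1) ∘
    exchangeFun (square (side (n + 2))) (corner (side (n + 2))) stepCycle := by
  funext x
  have hs := side_pos (n + 2)
  have hk := four_mul_side_le_one n
  have hl := two_mul_side_le_one (n + 1)
  rw [Function.comp_apply]
  by_cases hx : x ∈ block 4 2 (side (n + 2))
  · obtain ⟨p, hp⟩ := (mem_block_iff_exists hs hk hl x).1 hx
    have hq := add_sub_mem_vadd (stepCycle p) hp
    have hcol := rep_fst_lt_iff_of_mem_cell hs hk hl hq 2
    rw [show 1 - ((4 : ℕ) : ℝ) * side (n + 2) + (2 : ℕ) * side (n + 2) = 1 - 2 * side (n + 2) by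
      push_cast; ring] at hcol
    rw [exchangeFun_of_mem (pairwise_disjoint_cell hs hk hl) _ hp,
      chaconU_succ_of_mem_block n ((mem_block_iff_exists hs hk hl _).2 ⟨_, hq⟩),
      chaconU_add_two_of_mem_cell n hp, stepDisplacement_eq, ← add_assoc]
    simp only [hcol, Fin.lt_def, Fin.val_two]
  · rw [exchangeFun_of_forall_notMem _ fun p hp =>
      hx ((mem_block_iff_exists hs hk hl x).2 ⟨p, hp⟩), chaconU_of_notMem_block n hx]

instance : (volume : Measure T2).IsAddRightInvariant :=
  inferInstanceAs (Measure.prod volume volume).IsAddRightInvariant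

lemma exists_measurableEquiv_chaconU_succ (n : ℕ) :
    ∃ T : T2 ≃ᵐ T2, ⇑T = chaconU (n + 1) ∧ MeasurePreserving T volume volume := by
  induction n with
  | zero =>
    have hd := pairwise_disjoint_cell (side_pos 1) (two_mul_side_le_one 0) (two_mul_side_le_one 0)
    exact ⟨exchange (measurableSet_square _) hd baseCycle, chaconU_one_eq_exchangeFun.symm,
      measurePreserving_exchange volume _ hd _⟩
  | succ n ih =>
    obtain ⟨T, hTU, hT⟩ := ih
    have hd := pairwise_disjoint_cell (side_pos (n + 2)) (four_mul_side_le_one n)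
      (two_mul_side_le_one (n + 1))
    refine ⟨(exchange (measurableSet_square _) hd stepCycle).trans T, ?_,
      hT.comp (measurePreserving_exchange volume _ hd _)⟩
    rw [chaconU_add_two_eq_comp, ← hTU]
    rfl

lemma le_rep_of_mem_image_block {n : ℕ} {y : T2}
    (hy : y ∈ chaconU (n + 1) '' block 4 2 (side (n + 2))) :
    1 - 2 * side (n + 2) ≤ rep y.1 ∨ 1 - 2 * side (n + 2) ≤ rep y.2 := by
  obtain ⟨x, hx, rfl⟩ := hy
  rw [chaconU_succ_of_mem_block n hx]
  split_ifs with h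
  · right
    have hx2 : rep x.2 < 2 * side (n + 2) := hx.2
    have hl : 2 * side (n + 2) ≤ 1 := two_mul_side_le_one (n + 1)
    have h0 := rep_nonneg x.2
    have h2 : rep (x + cornerShift (side (n + 2))).2 = rep x.2 + (1 - 2 * side (n + 2)) :=
      rep_add_coe ⟨by linarith, by linarith⟩
    linarith
  · left
    rw [add_zero]
    exact not_lt.1 h

lemma exists_notMem_block_side (x : T2) : ∃ n, x ∉ block 4 2 (side (n + 2)) := by
  obtain ⟨n, hn⟩ := exists_side_lt (ε := (1 - rep x.1) / 4) (by linarith [rep_lt_one x.1])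
  refine ⟨n, fun hx => ?_⟩
  have hx1 : 1 - 4 * side (n + 2) ≤ rep x.1 := hx.1
  linarith

lemma exists_notMem_image_block_side (y : T2) :
    ∃ n, y ∉ chaconU (n + 1) '' block 4 2 (side (n + 2)) := by
  have hpos : 0 < 1 - max (rep y.1) (rep y.2) := by
    rw [sub_pos]
    exact max_lt (rep_lt_one y.1) (rep_lt_one y.2)
  obtain ⟨n, hn⟩ := exists_side_lt (half_pos hpos)
  refine ⟨n, fun hy => ?_⟩
  have h := le_max_iff.2 (le_rep_of_mem_image_block hy)
  linarith

end Chacon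

open Chacon in
theorem chacon_limit_is_automorphism_general :
    ∃ U : T2 ≃ᵐ T2, MeasurePreserving U volume volume ∧
      ∀ x, ∃ N : ℕ, 1 ≤ N ∧ ∀ n, N ≤ n → chaconU n x = U x := by
  choose T hTU hT using exists_measurableEquiv_chaconU_succ
  have h : StabilizesOff (fun n => (T n).toEquiv) fun n => block 4 2 (side (n + 2)) :=
    { antitone := (monotone_block 4 2).comp_antitone fun m n hmn => antitone_side (by lia)
      eqOn_compl n x hx := by simpa [hTU] using chaconU_of_notMem_block n hx
      exists_notMem := exists_notMem_block_side
      exists_notMem_image y := by simpa [hTU] using exists_notMem_image_block_side y }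
  have hB (n : ℕ) := measurableSet_block 4 2 (side (n + 2))
  refine ⟨h.limit hB, h.measurePreserving_limit hB hT, fun x => ?_⟩
  obtain ⟨N, hN⟩ := h.exists_notMem x
  refine ⟨N + 1, N.succ_pos, fun n hn => ?_⟩
  obtain ⟨m, rfl⟩ := Nat.exists_eq_add_of_le' (N.succ_pos.trans_le hn)
  rw [← hTU]
  exact (h.apply_eq (Nat.le_of_succ_le_succ hn) hN).trans (h.limitFun_eq hN).symm

/-- For a.e. `x` the sequence `(U_n(x))_{n ≥ 1}` is eventually constant, and its a.e.
pointwise limit `U` is an automorphism of the torus. -/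
theorem chacon_limit_is_automorphism :
    ∃ U : T2 → T2,
      (∀ᵐ x ∂(volume : Measure T2), ∃ N : ℕ, 1 ≤ N ∧ ∀ n, N ≤ n → chaconU n x = U x) ∧
      IsAutomorphism U := by
  obtain ⟨U, hU, hlim⟩ := chacon_limit_is_automorphism_general
  exact ⟨U, .of_forall hlim, U.measurable, U.symm, U.symm.measurable,
    .of_forall U.symm_apply_apply, .of_forall U.apply_symm_apply,
    fun _ hA => hU.measure_preimage hA.nullMeasurableSet⟩

end
end

section
/- For every n ≥ 2, the Chacon-type maps satisfy μ({x ∈ T² : U_n(x) ≠ U_{n−1}(x)}) ≤ 2·4^{1−n}. Consequently ∑_n μ({U_n ≠ U_{n−1}}) < ∞, and for μ-a.e. x the sequence (U_n(x))_{n≥1} is eventually constant. -/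
/-!
`U_n` differs from `U_{n-1}` only inside the rectangle `[1 - 4s, 1) × [0, 2s)` with `s = 2⁻ⁿ`, whose
area is `8 s² = 2 · 4^{1-n}`. These areas form a convergent geometric series, so by the
Borel–Cantelli lemma almost every point lies in only finitely many of the sets `{U_n ≠ U_{n-1}}`,
and the sequence of images of such a point stabilises.
-/

open MeasureTheory Filter Set
open scoped ENNReal symmDiff

noncomputable section

theorem eventuallyConst_comp_add_iff {β : Type*} (f : ℕ → β) (k : ℕ) :
    EventuallyConst (fun n ↦ f (n + k)) atTop ↔ EventuallyConst f atTop := by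
  rw [EventuallyConst, EventuallyConst, ← Function.comp_def f, ← map_map, map_add_atTop_eq_nat]

theorem ae_eventuallyConst_of_tsum_ne_top {α β F : Type*} [FunLike F (Set α) ℝ≥0∞]
    [OuterMeasureClass F α] {μ : F} {f : ℕ → α → β}
    (h : ∑' n, μ {x | f (n + 1) x ≠ f n x} ≠ ⊤) :
    ∀ᵐ x ∂μ, EventuallyConst (fun n ↦ f n x) atTop := by
  filter_upwards [ae_eventually_notMem h] with x hx
  simpa [eventuallyConst_atTop_nat] using hx

theorem measurePreserving_coe_equivIco (T : ℝ) [Fact (0 < T)] (a : ℝ) :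
    MeasurePreserving (fun x : AddCircle T ↦ (AddCircle.equivIco T a x : ℝ)) volume
      (volume.restrict (Ico a (a + T))) := by
  have hmeas : Measurable (fun x : AddCircle T ↦ (AddCircle.equivIco T a x : ℝ)) :=
    measurable_subtype_coe.comp (AddCircle.measurableEquivIco T a).measurable
  have hmk : MeasurePreserving ((↑) : ℝ → AddCircle T) (volume.restrict (Ico a (a + T))) :=
    restrict_Ico_eq_restrict_Ioc (μ := (volume : Measure ℝ)) ▸ AddCircle.measurePreserving_mk T a
  have hleft : (fun y : ℝ ↦ (AddCircle.equivIco T a y : ℝ))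
      =ᵐ[volume.restrict (Ico a (a + T))] id :=
    ae_restrict_of_forall_mem measurableSet_Ico fun _ hy ↦ AddCircle.equivIco_coe_of_mem hy
  refine ⟨hmeas, ?_⟩
  rw [← hmk.map_eq, Measure.map_map hmeas hmk.measurable, Function.comp_def,
    Measure.map_congr hleft, Measure.map_id]

theorem rep_mem_Ico (x : AddCircle (1 : ℝ)) : rep x ∈ Ico 0 1 := by
  have h : rep x ∈ Ico 0 (0 + 1) := (AddCircle.equivIco 1 0 x).2
  rwa [zero_add] at h

theorem volume_rep_preimage_le (I : Set ℝ) : volume (rep ⁻¹' I) ≤ volume I :=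
  ((measurePreserving_coe_equivIco 1 0).measure_preimage_le I).trans (Measure.restrict_le_self I)

/-- The part of the torus corresponding to the rectangle `I × J`, read in the fundamental domain
`[0,1)²`; the parts of `I` and `J` outside `[0,1)` contribute nothing. -/
def torusRectangle (I J : Set ℝ) : Set T2 := (rep ⁻¹' I) ×ˢ (rep ⁻¹' J)

theorem volume_torusRectangle_le (I J : Set ℝ) :
    volume (torusRectangle I J) ≤ volume I * volume J := by
  rw [torusRectangle, Measure.volume_eq_prod, Measure.prod_prod]
  exact mul_le_mul' (volume_rep_preimage_le I) (volume_rep_preimage_le J)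

/-- The rectangle `[1 - 4s, 1) × [0, 2s)`, `s = 2⁻ⁿ`, on which the recursive definition of the
Chacon-type map `U_n` (for `n ≥ 2`) replaces `U_{n-1}` by translations. -/
def modificationRectangle (n : ℕ) : Set T2 :=
  torusRectangle (Ico (1 - 4 * (1 / 2 ^ n)) 1) (Ico 0 (2 * (1 / 2 ^ n)))

theorem volume_modificationRectangle_le (n : ℕ) :
    volume (modificationRectangle n) ≤ 8 / 4 ^ n := by
  have harea : (1 - (1 - 4 * (1 / 2 ^ n)) : ℝ) * (2 * (1 / 2 ^ n) - 0) = 8 / 4 ^ n := by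
    rw [show (4 : ℝ) = 2 * 2 by norm_num, mul_pow]
    field_simp
    norm_num
  calc volume (modificationRectangle n)
      ≤ volume (Ico (1 - 4 * (1 / 2 ^ n) : ℝ) 1) * volume (Ico (0 : ℝ) (2 * (1 / 2 ^ n))) :=
        volume_torusRectangle_le _ _
    _ = ENNReal.ofReal (8 / 4 ^ n) := by
        rw [Real.volume_Ico, Real.volume_Ico, ← ENNReal.ofReal_mul' (by simp), harea]
    _ = 8 / 4 ^ n := by
        rw [ENNReal.ofReal_div_of_pos (by positivity), ENNReal.ofReal_pow (by norm_num)]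
        norm_num

theorem chaconU_eq_of_notMem_modificationRectangle {n : ℕ} {x : T2}
    (hx : x ∉ modificationRectangle (n + 2)) : chaconU (n + 2) x = chaconU (n + 1) x := by
  have hs : (0 : ℝ) < 1 / 2 ^ (n + 2) := by positivity
  have hout : ¬(1 - 4 * (1 / 2 ^ (n + 2)) ≤ rep x.1 ∧ rep x.2 < 2 * (1 / 2 ^ (n + 2))) :=
    fun h ↦ hx ⟨⟨h.1, (rep_mem_Ico x.1).2⟩, (rep_mem_Ico x.2).1, h.2⟩
  rw [chaconU]
  generalize (1 : ℝ) / 2 ^ (n + 2) = s at hs hout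
  dsimp only
  -- Lying in any of the seven cells where `U_n` is redefined would contradict `hout`.
  iterate 7 rw [if_neg fun h ↦ hout ⟨by linarith [h.1], by linarith [h.2.2.2]⟩]

theorem volume_chaconU_ne_le (n : ℕ) :
    volume {x : T2 | chaconU (n + 2) x ≠ chaconU (n + 1) x} ≤ 2 / 4 ^ (n + 1) :=
  calc volume {x : T2 | chaconU (n + 2) x ≠ chaconU (n + 1) x}
      ≤ volume (modificationRectangle (n + 2)) :=
        measure_mono fun _ hx ↦ not_imp_comm.1 chaconU_eq_of_notMem_modificationRectangle hx
    _ ≤ 8 / 4 ^ (n + 2) := volume_modificationRectangle_le (n + 2)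
    _ = 2 * 4 / (4 ^ (n + 1) * 4) := by rw [pow_succ _ (n + 1)]; norm_num
    _ = 2 / 4 ^ (n + 1) := ENNReal.mul_div_mul_right _ _ (by norm_num) (by norm_num)

theorem tsum_volume_chaconU_ne_lt_top :
    ∑' n : ℕ, volume {x : T2 | chaconU (n + 2) x ≠ chaconU (n + 1) x} < ⊤ :=
  calc ∑' n : ℕ, volume {x : T2 | chaconU (n + 2) x ≠ chaconU (n + 1) x}
      ≤ ∑' n : ℕ, 2 / 4 ^ (n + 1) := ENNReal.tsum_le_tsum volume_chaconU_ne_le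
    _ = 2 * (4⁻¹ * ∑' n : ℕ, (4 : ℝ≥0∞)⁻¹ ^ n) := by
        simp_rw [div_eq_mul_inv, ENNReal.inv_pow, pow_succ', ENNReal.tsum_mul_left]
    _ < ⊤ := by
        have hgeom : ∑' n : ℕ, (4 : ℝ≥0∞)⁻¹ ^ n < ⊤ := tsum_geometric_lt_top.2 (by norm_num)
        finiteness

theorem ae_eventuallyConst_chaconU :
    ∀ᵐ x : T2, EventuallyConst (fun n ↦ chaconU n x) atTop := by
  filter_upwards [ae_eventuallyConst_of_tsum_ne_top (f := fun n ↦ chaconU (n + 1))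
    tsum_volume_chaconU_ne_lt_top.ne] with x hx
  exact (eventuallyConst_comp_add_iff (fun n ↦ chaconU n x) 1).1 hx

/-- `μ({U_n ≠ U_{n-1}}) ≤ 2·4^{1-n}` for `n ≥ 2`; hence the series of these measures
converges, and for a.e. `x` the sequence `(U_n(x))` is eventually constant. -/
theorem chacon_approximation :
    (∀ n : ℕ, 2 ≤ n →
      volume {x : T2 | chaconU n x ≠ chaconU (n-1) x} ≤ 2 / 4 ^ (n-1)) ∧
    (∑' n : ℕ, volume {x : T2 | chaconU (n+2) x ≠ chaconU (n+1) x}) < ⊤ ∧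
    (∀ᵐ x ∂(volume : Measure T2), ∃ N : ℕ, ∀ n, N ≤ n → chaconU n x = chaconU N x) := by
  refine ⟨fun n hn ↦ ?_, tsum_volume_chaconU_ne_lt_top, ?_⟩
  · obtain ⟨m, rfl⟩ := Nat.exists_eq_add_of_le' hn
    exact volume_chaconU_ne_le m
  · simpa only [eventuallyConst_atTop] using ae_eventuallyConst_chaconU

end
end
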